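/- arXiv:1807.06549 — 2 statements merged into one kernel-verified Lean document; each statement's English description precedes it below -/
import Mathlib

section
/- Let a > 0 and b > 0 be real numbers, and define h(x) := ((cosh(a(2−x)) − cos(2b)cosh(ax))cos(bx) − sin(2b)sin(bx)cosh(ax))/(cosh(2a) − cos(2b)) and g(x) := (sin(2b)cos(bx)sinh(ax) − (sinh(a(2−x)) + cos(2b)sinh(ax))sin(bx))/(cosh(2a) − cos(2b)). Then (1/2)∫₀¹ (h(x)² + g(x)²) dx = (b·sinh(2a) − a·sin(2b))/(4ab(cosh(2a) − cos(2b))). -/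
/-!
The profiles satisfy `h² + g² = (cosh (2a(1-x)) - cos (2b(1-x))) / (cosh (2a) - cos (2b))`.
To see this, put `u = a(1-x)` and `v = b(1-x)`, so that `a(2-x) = a + u`, `ax = a - u`, and likewise
for `b`. The numerators of `h` and `g` become
`2 (cosh a cosh u sin b sin v + sinh a sinh u cos b cos v)` and
`2 (sinh a cosh u cos b sin v - cosh a sinh u sin b cos v)`.
In the sum of their squares the cross terms cancel and the rest factors as
`4 (cosh² a sin² b + sinh² a cos² b) (cosh² u sin² v + sinh² u cos² v)`, in which each bracket has
the form `cosh² s sin² t + sinh² s cos² t = (cosh (2s) - cos (2t)) / 2`.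
The right-hand side has an elementary antiderivative.
-/

open Real intervalIntegral MeasureTheory

noncomputable section

/-- The profile `h`. -/
def hProf (a b : ℝ) (x : ℝ) : ℝ :=
  ((Real.cosh (a * (2 - x)) - Real.cos (2 * b) * Real.cosh (a * x)) * Real.cos (b * x) -
    Real.sin (2 * b) * Real.sin (b * x) * Real.cosh (a * x)) /
  (Real.cosh (2 * a) - Real.cos (2 * b))

/-- The profile `g`. -/
def gProf (a b : ℝ) (x : ℝ) : ℝ :=
  (Real.sin (2 * b) * Real.cos (b * x) * Real.sinh (a * x) -
    (Real.sinh (a * (2 - x)) + Real.cos (2 * b) * Real.sinh (a * x)) * Real.sin (b * x)) /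
  (Real.cosh (2 * a) - Real.cos (2 * b))

lemma cosh_two_sub_cos_two (s t : ℝ) :
    cosh (2 * s) - cos (2 * t) = 2 * (cosh s ^ 2 * sin t ^ 2 + sinh s ^ 2 * cos t ^ 2) := by
  rw [Real.cosh_two_mul, Real.cos_two_mul, Real.sinh_sq, Real.sin_sq]
  ring

lemma cosh_sub_cos_pos {a : ℝ} (b : ℝ) (ha : 0 < a) : 0 < cosh (2 * a) - cos (2 * b) := by
  have h1 : 1 < cosh (2 * a) := Real.one_lt_cosh.2 (by positivity)
  linarith [Real.cos_le_one (2 * b)]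

lemma hProf_sq_add_gProf_sq {a : ℝ} (b : ℝ) (ha : 0 < a) (x : ℝ) :
    hProf a b x ^ 2 + gProf a b x ^ 2 =
      (cosh (2 * (a * (1 - x))) - cos (2 * (b * (1 - x)))) / (cosh (2 * a) - cos (2 * b)) := by
  have hD := (cosh_sub_cos_pos b ha).ne'
  have hh : hProf a b x = (cosh (a * (2 - x)) * cos (b * x)
      - cosh (a * x) * cos (2 * b - b * x)) / (cosh (2 * a) - cos (2 * b)) := by
    rw [hProf, Real.cos_sub]; ring
  have hg : gProf a b x = (sin (2 * b - b * x) * sinh (a * x)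
      - sinh (a * (2 - x)) * sin (b * x)) / (cosh (2 * a) - cos (2 * b)) := by
    rw [gProf, Real.sin_sub]; ring
  rw [hh, hg, show a * (2 - x) = a + a * (1 - x) by ring,
    show 2 * b - b * x = b + b * (1 - x) by ring,
    show a * x = a - a * (1 - x) by ring, show b * x = b - b * (1 - x) by ring]
  generalize a * (1 - x) = u
  generalize b * (1 - x) = v
  rw [div_pow, div_pow, ← add_div, div_eq_div_iff (pow_ne_zero 2 hD) hD,
    cosh_two_sub_cos_two u v, cosh_two_sub_cos_two a b, Real.cosh_add, Real.cosh_sub,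
    Real.sinh_add, Real.sinh_sub, Real.cos_add, Real.cos_sub, Real.sin_add, Real.sin_sub]
  ring

/-- `(1/2)∫₀¹ (h² + g²) = (b sinh(2a) − a sin(2b))/(4ab(cosh(2a) − cos(2b)))`. -/
theorem profile_mean_square (a b : ℝ) (ha : 0 < a) (hb : 0 < b) :
    (1 / 2) * ∫ x in (0:ℝ)..1, ((hProf a b x) ^ 2 + (gProf a b x) ^ 2) =
      (b * Real.sinh (2 * a) - a * Real.sin (2 * b)) /
        (4 * a * b * (Real.cosh (2 * a) - Real.cos (2 * b))) := by
  have hD := (cosh_sub_cos_pos b ha).ne'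
  simp_rw [hProf_sq_add_gProf_sq b ha]
  have hderiv : ∀ x ∈ Set.uIcc (0:ℝ) 1, HasDerivAt
      (fun x => (sin (2 * (b * (1 - x))) / (2 * b) - sinh (2 * (a * (1 - x))) / (2 * a)) /
        (cosh (2 * a) - cos (2 * b)))
      ((cosh (2 * (a * (1 - x))) - cos (2 * (b * (1 - x)))) / (cosh (2 * a) - cos (2 * b))) x := by
    intro x _
    have hlin : ∀ c : ℝ, HasDerivAt (fun x : ℝ => 2 * (c * (1 - x))) (2 * (c * (-1))) x := fun c =>
      (((hasDerivAt_id x).const_sub 1).const_mul c).const_mul 2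
    refine ((((hlin b).sin.div_const (2 * b)).sub
      ((hlin a).sinh.div_const (2 * a))).div_const _).congr_deriv ?_
    field_simp
    ring
  rw [integral_eq_sub_of_hasDerivAt hderiv (Continuous.intervalIntegrable (by fun_prop) _ _)]
  simp only [sub_zero, sub_self, mul_zero, mul_one, Real.sin_zero, Real.sinh_zero, zero_div]
  field_simp
  ring
end
end

section
/- Let a > 0 and b > 0 be real numbers, and define h(x) := ((cosh(a(2−x)) − cos(2b)cosh(ax))cos(bx) − sin(2b)sin(bx)cosh(ax))/(cosh(2a) − cos(2b)) and g(x) := (sin(2b)cos(bx)sinh(ax) − (sinh(a(2−x)) + cos(2b)sinh(ax))sin(bx))/(cosh(2a) − cos(2b)). Then (1/2)∫₀¹ (g(x)² − h(x)²) dx = (cosh(2a)cos(2b) − 1)/(2(cosh(2a) − cos(2b))²) + (b·sin(2b) − a·sinh(2a))/(4(a²+b²)(cosh(2a) − cos(2b))). -/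
/-!
Put `w = a + ib`, `s = 1 - x` and `D = cosh 2a - cos 2b`. The addition formulas give
`D (h - i g) = cosh (a(2-x) + ibx) - cosh (ax + ib(2-x)) = 2 sinh w * sinh (conj w * s)`, so
`D² (g² - h²) = -Re ((cosh 2w - 1) (cosh (2 conj w s) - 1))`. In real terms
(`profile_sq_difference_eq`) this is a combination of `cosh 2as cos 2bs`, `sinh 2as sin 2bs` and a
constant, which has the elementary antiderivative `profilePrimitive`; the integral is then the
difference of its values at the endpoints, and the one at `x = 1` is zero.
-/

open Real intervalIntegral MeasureTheory

noncomputable section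

/-- The real part of `2 sinh² (u + iv) = cosh (2(u + iv)) - 1`. -/
lemma re_two_sinh_sq (u v : ℝ) :
    2 * ((sinh u * cos v) ^ 2 - (cosh u * sin v) ^ 2) = cosh (2 * u) * cos (2 * v) - 1 := by
  have h1 := Real.cosh_sq u
  have h2 := Real.cos_sq' v
  rw [Real.cosh_two_mul, Real.cos_two_mul, mul_pow, mul_pow, h1, h2]
  ring

lemma profile_denominator_pos (a b : ℝ) (ha : 0 < a) : 0 < cosh (2 * a) - cos (2 * b) := by
  have h1 : 1 < cosh (2 * a) := Real.one_lt_cosh.2 (by positivity)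
  linarith [Real.cos_le_one (2 * b)]

/-- The real part of `2 sinh (a + ib) * sinh ((a - ib)(1 - x))`, up to the denominator. -/
lemma hProf_eq (a b x : ℝ) :
    hProf a b x = 2 * (sinh a * cos b * (sinh (a * (1 - x)) * cos (b * (1 - x))) +
      cosh a * sin b * (cosh (a * (1 - x)) * sin (b * (1 - x)))) /
      (cosh (2 * a) - cos (2 * b)) := by
  have e1 : a * (2 - x) = a + a * (1 - x) := by ring
  have e2 : a * x = a - a * (1 - x) := by ring
  have e3 : cos (2 * b) * cos (b * x) + sin (2 * b) * sin (b * x) = cos (b + b * (1 - x)) := by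
    rw [← Real.cos_sub]; congr 1; ring
  have e4 : cos (b * x) = cos (b - b * (1 - x)) := by congr 1; ring
  have e5 : (cosh (a * (2 - x)) - cos (2 * b) * cosh (a * x)) * cos (b * x) -
      sin (2 * b) * sin (b * x) * cosh (a * x) =
      cosh (a * (2 - x)) * cos (b * x) - cosh (a * x) * cos (b + b * (1 - x)) := by
    rw [← e3]; ring
  rw [hProf, e5, e4, e1, e2, Real.cosh_add, Real.cosh_sub, Real.cos_add, Real.cos_sub]
  congr 1
  ring

/-- Minus the imaginary part of `2 sinh (a + ib) * sinh ((a - ib)(1 - x))`, up to the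
denominator. -/
lemma gProf_eq (a b x : ℝ) :
    gProf a b x = 2 * (sinh a * cos b * (cosh (a * (1 - x)) * sin (b * (1 - x))) -
      cosh a * sin b * (sinh (a * (1 - x)) * cos (b * (1 - x)))) /
      (cosh (2 * a) - cos (2 * b)) := by
  have e1 : a * (2 - x) = a + a * (1 - x) := by ring
  have e2 : a * x = a - a * (1 - x) := by ring
  have e3 : sin (2 * b) * cos (b * x) - cos (2 * b) * sin (b * x) = sin (b + b * (1 - x)) := by
    rw [← Real.sin_sub]; congr 1; ring
  have e4 : sin (b * x) = sin (b - b * (1 - x)) := by congr 1; ring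
  have e5 : sin (2 * b) * cos (b * x) * sinh (a * x) -
      (sinh (a * (2 - x)) + cos (2 * b) * sinh (a * x)) * sin (b * x) =
      sinh (a * x) * sin (b + b * (1 - x)) - sinh (a * (2 - x)) * sin (b * x) := by
    rw [← e3]; ring
  rw [gProf, e5, e4, e1, e2, Real.sinh_add, Real.sinh_sub, Real.sin_add, Real.sin_sub]
  congr 1
  ring

lemma profile_sq_difference_eq (a b x : ℝ) :
    gProf a b x ^ 2 - hProf a b x ^ 2 =
      -((cosh (2 * a) * cos (2 * b) - 1) *
          (cosh (2 * (a * (1 - x))) * cos (2 * (b * (1 - x))) - 1) +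
        sinh (2 * a) * sin (2 * b) * (sinh (2 * (a * (1 - x))) * sin (2 * (b * (1 - x))))) /
      (cosh (2 * a) - cos (2 * b)) ^ 2 := by
  rw [hProf_eq, gProf_eq, div_pow, div_pow, ← sub_div, ← re_two_sinh_sq a b,
    ← re_two_sinh_sq (a * (1 - x)) (b * (1 - x)), Real.sinh_two_mul a, Real.sin_two_mul b,
    Real.sinh_two_mul (a * (1 - x)), Real.sin_two_mul (b * (1 - x))]
  congr 1
  ring

/-- An antiderivative of `g² - h²`, normalised to vanish at `x = 1`. -/
def profilePrimitive (a b x : ℝ) : ℝ :=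
  ((cosh (2 * a) * cos (2 * b) - 1) *
      ((a * (sinh (2 * (a * (1 - x))) * cos (2 * (b * (1 - x)))) +
        b * (cosh (2 * (a * (1 - x))) * sin (2 * (b * (1 - x))))) / (2 * (a ^ 2 + b ^ 2)) -
        (1 - x)) +
    sinh (2 * a) * sin (2 * b) *
      ((a * (cosh (2 * (a * (1 - x))) * sin (2 * (b * (1 - x)))) -
        b * (sinh (2 * (a * (1 - x))) * cos (2 * (b * (1 - x))))) / (2 * (a ^ 2 + b ^ 2)))) /
  (cosh (2 * a) - cos (2 * b)) ^ 2

lemma hasDerivAt_profilePrimitive (a b x : ℝ) (ha : 0 < a) :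
    HasDerivAt (profilePrimitive a b) (gProf a b x ^ 2 - hProf a b x ^ 2) x := by
  have hs : HasDerivAt (fun y : ℝ => 1 - y) (-1) x := by
    simpa using (hasDerivAt_id x).const_sub 1
  have hu : HasDerivAt (fun y : ℝ => 2 * (a * (1 - y))) (2 * (a * -1)) x :=
    (hs.const_mul a).const_mul 2
  have hv : HasDerivAt (fun y : ℝ => 2 * (b * (1 - y))) (2 * (b * -1)) x :=
    (hs.const_mul b).const_mul 2
  have hsc := hu.sinh.mul hv.cos
  have hcs := hu.cosh.mul hv.sin
  have H := (((((hsc.const_mul a).add (hcs.const_mul b)).div_const (2 * (a ^ 2 + b ^ 2))).sub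
    hs).const_mul (cosh (2 * a) * cos (2 * b) - 1)).add
    ((((hcs.const_mul a).sub (hsc.const_mul b)).div_const (2 * (a ^ 2 + b ^ 2))).const_mul
      (sinh (2 * a) * sin (2 * b)))
  have H' := H.div_const ((cosh (2 * a) - cos (2 * b)) ^ 2)
  rw [profile_sq_difference_eq]
  refine H'.congr_deriv ?_
  have hr : a ^ 2 + b ^ 2 ≠ 0 := by positivity
  congr 1
  field_simp
  ring

/-- `(1/2)∫₀¹ (g² − h²) = (cosh(2a)cos(2b) − 1)/(2(cosh(2a) − cos(2b))²)
 + (b sin(2b) − a sinh(2a))/(4(a²+b²)(cosh(2a) − cos(2b)))`. -/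
theorem profile_sq_difference_integral (a b : ℝ) (ha : 0 < a) (hb : 0 < b) :
    (1 / 2) * ∫ x in (0:ℝ)..1, ((gProf a b x) ^ 2 - (hProf a b x) ^ 2) =
      (Real.cosh (2 * a) * Real.cos (2 * b) - 1) /
        (2 * (Real.cosh (2 * a) - Real.cos (2 * b)) ^ 2) +
      (b * Real.sin (2 * b) - a * Real.sinh (2 * a)) /
        (4 * (a ^ 2 + b ^ 2) * (Real.cosh (2 * a) - Real.cos (2 * b))) := by
  have hint : (∫ x in (0:ℝ)..1, ((gProf a b x) ^ 2 - (hProf a b x) ^ 2)) =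
      profilePrimitive a b 1 - profilePrimitive a b 0 := by
    refine integral_eq_sub_of_hasDerivAt
      (fun x _ => hasDerivAt_profilePrimitive a b x ha) ?_
    apply Continuous.intervalIntegrable
    unfold gProf hProf
    fun_prop
  have hD := (profile_denominator_pos a b ha).ne'
  have hr : a ^ 2 + b ^ 2 ≠ 0 := by positivity
  have h1 : profilePrimitive a b 1 = 0 := by simp [profilePrimitive]
  -- With `cosh² - sinh² = 1` and `cos² + sin² = 1` the boundary term at `0` contains a factor `D`.
  have key : (cosh (2 * a) * cos (2 * b) - 1) *
        (a * (sinh (2 * a) * cos (2 * b)) + b * (cosh (2 * a) * sin (2 * b))) +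
      sinh (2 * a) * sin (2 * b) *
        (a * (cosh (2 * a) * sin (2 * b)) - b * (sinh (2 * a) * cos (2 * b))) =
      (a * sinh (2 * a) - b * sin (2 * b)) * (cosh (2 * a) - cos (2 * b)) := by
    linear_combination (b * sin (2 * b) * cos (2 * b)) * Real.cosh_sq (2 * a) +
      (a * sinh (2 * a) * cosh (2 * a)) * Real.sin_sq_add_cos_sq (2 * b)
  have h0 : profilePrimitive a b 0 =
      ((a * sinh (2 * a) - b * sin (2 * b)) * (cosh (2 * a) - cos (2 * b)) /
        (2 * (a ^ 2 + b ^ 2)) - (cosh (2 * a) * cos (2 * b) - 1)) /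
      (cosh (2 * a) - cos (2 * b)) ^ 2 := by
    rw [← key, profilePrimitive]
    simp only [sub_zero, mul_one]
    congr 1
    ring
  rw [hint, h1, h0]
  field_simp
  ring
end
end
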